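/- With sech t = 1/cosh t and Φₐ(y) = tanh(y)·sech²(y), define Φₚ⁽⁰⁾(y) = (1/8)·(15·tanh(y) + 3y)·Φₐ(y) − (1/4)·tanh²(y) − (1/8)·sinh²(y)·(15·tanh⁴(y) − 25·tanh²(y) + 8) and Φₚ⁽¹⁾(y) = (√2/8)·( sinh(2y) − 4y + 6·tanh(y) − (6y² + 15)·Φₐ(y) + 12·y·sech²(y) ). Then v₀(y) = Φₚ⁽⁰⁾(y/√2) satisfies v₀''(y) + 2·(3·sech²(y/√2) − 1)·v₀(y) = 1 for all y ∈ ℝ, and v₁(y) = Φₚ⁽¹⁾(y/√2) satisfies v₁''(y) + 2·(3·sech²(y/√2) − 1)·v₁(y) = y for all y ∈ ℝ. -/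

import Mathlib

/-- The hyperbolic secant. -/
noncomputable def sech (t : ℝ) : ℝ := 1 / Real.cosh t

/-- The antisymmetric complementary function. -/
noncomputable def Phi_a (y : ℝ) : ℝ := Real.tanh y * (sech y) ^ 2

/-- Particular integral for right-hand side `1`. -/
noncomputable def Phi_p0 (y : ℝ) : ℝ :=
  (1/8) * (15 * Real.tanh y + 3 * y) * Phi_a y - (1/4) * (Real.tanh y) ^ 2
    - (1/8) * (Real.sinh y) ^ 2
      * (15 * (Real.tanh y) ^ 4 - 25 * (Real.tanh y) ^ 2 + 8)

/-- Particular integral for right-hand side `y`. -/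
noncomputable def Phi_p1 (y : ℝ) : ℝ :=
  (Real.sqrt 2 / 8) * (Real.sinh (2 * y) - 4 * y + 6 * Real.tanh y
    - (6 * y ^ 2 + 15) * Phi_a y + 12 * y * (sech y) ^ 2)

/-! In the variable `t = y/√2` both equations become `u'' + 4 (3 sech² t - 1) u = F`. The particular
integrals are combinations of `1`, `t`, `tanh t`, `sech² t`, `Φₐ t`, `cosh 2t`, `sinh 2t` and of
products of these with powers of `t`, so by linearity it suffices to know the image of each of them
under `L u = u'' + 4 (3 sech² t - 1) u`; the powers of `t` are handled by `L (t u) = t L u + 2 u'`,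
and `L Φₐ = 0` because `Φₐ` is proportional to the derivative of the homoclinic. -/

section ParticularIntegral

variable {𝕜 : Type*} [NontriviallyNormedField 𝕜] {q F G u v u' : 𝕜 → 𝕜}

/-- `u` is a particular integral of the linear equation `u'' + q u = F`. The equation is stated as a
derivative of `deriv u`, so that `u` is genuinely twice differentiable. -/
structure IsParticularIntegral (q F u : 𝕜 → 𝕜) : Prop where
  differentiable : Differentiable 𝕜 u
  hasDerivAt_deriv : ∀ t, HasDerivAt (deriv u) (F t - q t * u t) t

namespace IsParticularIntegral

theorem of_hasDerivAt (hu : ∀ t, HasDerivAt u (u' t) t)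
    (hu' : ∀ t, HasDerivAt u' (F t - q t * u t) t) : IsParticularIntegral q F u where
  differentiable t := (hu t).differentiableAt
  hasDerivAt_deriv := by rwa [show deriv u = u' from funext fun t => (hu t).deriv]

theorem hasDerivAt (h : IsParticularIntegral q F u) (t : 𝕜) : HasDerivAt u (deriv u t) t :=
  (h.differentiable t).hasDerivAt

theorem deriv_deriv_add (h : IsParticularIntegral q F u) (t : 𝕜) :
    deriv (deriv u) t + q t * u t = F t := by
  rw [(h.hasDerivAt_deriv t).deriv, sub_add_cancel]

theorem congr (h : IsParticularIntegral q F u) (hF : ∀ t, F t = G t) (hu : ∀ t, u t = v t) :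
    IsParticularIntegral q G v :=
  funext hF ▸ funext hu ▸ h

theorem const (c : 𝕜) : IsParticularIntegral q (fun t => q t * c) fun _ => c :=
  of_hasDerivAt (fun t => hasDerivAt_const t c) fun t =>
    (hasDerivAt_const t 0).congr_deriv (sub_self _).symm

theorem id : IsParticularIntegral q (fun t => q t * t) fun t => t :=
  of_hasDerivAt hasDerivAt_id' fun t => (hasDerivAt_const t 1).congr_deriv (sub_self _).symm

theorem add (hu : IsParticularIntegral q F u) (hv : IsParticularIntegral q G v) :
    IsParticularIntegral q (fun t => F t + G t) fun t => u t + v t :=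
  of_hasDerivAt (fun t => (hu.hasDerivAt t).fun_add (hv.hasDerivAt t)) fun t =>
    ((hu.hasDerivAt_deriv t).fun_add (hv.hasDerivAt_deriv t)).congr_deriv (by ring)

theorem const_mul (h : IsParticularIntegral q F u) (c : 𝕜) :
    IsParticularIntegral q (fun t => c * F t) fun t => c * u t :=
  of_hasDerivAt (fun t => (h.hasDerivAt t).const_mul c) fun t =>
    ((h.hasDerivAt_deriv t).const_mul c).congr_deriv (by ring)

theorem sub (hu : IsParticularIntegral q F u) (hv : IsParticularIntegral q G v) :
    IsParticularIntegral q (fun t => F t - G t) fun t => u t - v t :=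
  (hu.add (hv.const_mul (-1))).congr (fun _ => by ring) fun _ => by ring

theorem id_mul (h : IsParticularIntegral q F u) (hu : ∀ t, HasDerivAt u (u' t) t) :
    IsParticularIntegral q (fun t => t * F t + 2 * u' t) fun t => t * u t := by
  obtain rfl : deriv u = u' := funext fun t => (hu t).deriv
  exact of_hasDerivAt (fun t => (hasDerivAt_id' t).fun_mul (h.hasDerivAt t)) fun t =>
    (((h.hasDerivAt t).const_mul 1).fun_add
      ((hasDerivAt_id' t).fun_mul (h.hasDerivAt_deriv t))).congr_deriv (by ring)

theorem comp_div (h : IsParticularIntegral q F u) (c : 𝕜) :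
    IsParticularIntegral (fun y => q (y / c) / c ^ 2) (fun y => F (y / c) / c ^ 2)
      fun y => u (y / c) := by
  have hdiv (y : 𝕜) : HasDerivAt (fun y => y / c) (1 / c) y := (hasDerivAt_id' y).div_const c
  exact of_hasDerivAt (fun y => (h.hasDerivAt (y / c)).comp y (hdiv y)) fun y =>
    (((h.hasDerivAt_deriv (y / c)).comp y (hdiv y)).mul_const (1 / c)).congr_deriv (by ring)

end IsParticularIntegral

end ParticularIntegral

theorem sinh_eq_tanh_mul_cosh (t : ℝ) : Real.sinh t = Real.tanh t * Real.cosh t := by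
  rw [Real.tanh_eq_sinh_div_cosh, div_mul_cancel₀ _ (Real.cosh_pos t).ne']

theorem cosh_mul_sech (t : ℝ) : Real.cosh t * sech t = 1 :=
  mul_one_div_cancel (Real.cosh_pos t).ne'

theorem tanh_sq_add_sech_sq (t : ℝ) : Real.tanh t ^ 2 + sech t ^ 2 = 1 := by
  have hcosh := (Real.cosh_pos t).ne'
  rw [Real.tanh_eq_sinh_div_cosh, sech]
  field_simp
  exact (Real.cosh_sq t).symm

theorem cosh_two_mul_mul_sech_sq (t : ℝ) : Real.cosh (2 * t) * sech t ^ 2 = 2 - sech t ^ 2 := by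
  rw [Real.cosh_two_mul, Real.sinh_sq]
  linear_combination 2 * (Real.cosh t * sech t + 1) * cosh_mul_sech t

theorem sinh_two_mul_mul_sech_sq (t : ℝ) : Real.sinh (2 * t) * sech t ^ 2 = 2 * Real.tanh t := by
  rw [Real.sinh_two_mul, sinh_eq_tanh_mul_cosh]
  linear_combination 2 * Real.tanh t * (Real.cosh t * sech t + 1) * cosh_mul_sech t

theorem hasDerivAt_tanh (t : ℝ) : HasDerivAt Real.tanh (sech t ^ 2) t := by
  have hcosh := (Real.cosh_pos t).ne'
  rw [show Real.tanh = fun x => Real.sinh x / Real.cosh x from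
    funext Real.tanh_eq_sinh_div_cosh]
  refine ((Real.hasDerivAt_sinh t).fun_div (Real.hasDerivAt_cosh t) hcosh).congr_deriv ?_
  rw [sech, one_div_pow]
  congr 1
  linear_combination Real.cosh_sq t

theorem hasDerivAt_sech_sq (t : ℝ) : HasDerivAt (fun t => sech t ^ 2) (-2 * Phi_a t) t := by
  rw [show (fun t => sech t ^ 2) = fun t => 1 - Real.tanh t ^ 2 from
    funext fun t => eq_sub_of_add_eq' (tanh_sq_add_sech_sq t)]
  exact (((hasDerivAt_tanh t).fun_pow 2).const_sub 1).congr_deriv (by rw [Phi_a]; ring)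

theorem hasDerivAt_Phi_a (t : ℝ) : HasDerivAt Phi_a (3 * sech t ^ 4 - 2 * sech t ^ 2) t := by
  refine ((hasDerivAt_tanh t).fun_mul (hasDerivAt_sech_sq t)).congr_deriv ?_
  rw [Phi_a]
  linear_combination (-2 * sech t ^ 2) * tanh_sq_add_sech_sq t

theorem hasDerivAt_sech_pow_four (t : ℝ) :
    HasDerivAt (fun t => sech t ^ 4) (-4 * sech t ^ 2 * Phi_a t) t := by
  simpa only [← pow_mul] using
    ((hasDerivAt_sech_sq t).fun_pow 2).congr_deriv (by push_cast; ring)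

/-- The potential of the equation linearised about the homoclinic `U₀ᴴ`, in the variable
`t = y/√2`: the potential `2 U₀ᴴ` doubles because `d²/dt² = 2 d²/dy²`. -/
noncomputable def linearisedPotential (t : ℝ) : ℝ := 4 * (3 * sech t ^ 2 - 1)

theorem isParticularIntegral_tanh : IsParticularIntegral linearisedPotential
    (fun t => 10 * Phi_a t - 4 * Real.tanh t) Real.tanh :=
  .of_hasDerivAt hasDerivAt_tanh fun t =>
    (hasDerivAt_sech_sq t).congr_deriv (by rw [linearisedPotential, Phi_a]; ring)

theorem isParticularIntegral_sech_sq : IsParticularIntegral linearisedPotential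
    (fun t => 6 * sech t ^ 4) fun t => sech t ^ 2 :=
  .of_hasDerivAt hasDerivAt_sech_sq fun t =>
    ((hasDerivAt_Phi_a t).const_mul (-2)).congr_deriv (by rw [linearisedPotential]; ring)

theorem isParticularIntegral_Phi_a : IsParticularIntegral linearisedPotential (fun _ => 0) Phi_a :=
  .of_hasDerivAt hasDerivAt_Phi_a fun t =>
    (((hasDerivAt_sech_pow_four t).const_mul 3).fun_sub
      ((hasDerivAt_sech_sq t).const_mul 2)).congr_deriv (by rw [linearisedPotential]; ring)

theorem isParticularIntegral_cosh_two_mul : IsParticularIntegral linearisedPotential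
    (fun t => 24 - 12 * sech t ^ 2) fun t => Real.cosh (2 * t) := by
  have hdouble (t : ℝ) : HasDerivAt (fun t => 2 * t) 2 t := hasDerivAt_const_mul 2
  refine .of_hasDerivAt (fun t => (hdouble t).cosh) fun t =>
    ((hdouble t).sinh.mul_const 2).congr_deriv ?_
  rw [linearisedPotential]
  linear_combination 12 * cosh_two_mul_mul_sech_sq t

theorem isParticularIntegral_sinh_two_mul : IsParticularIntegral linearisedPotential
    (fun t => 24 * Real.tanh t) fun t => Real.sinh (2 * t) := by
  have hdouble (t : ℝ) : HasDerivAt (fun t => 2 * t) 2 t := hasDerivAt_const_mul 2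
  refine .of_hasDerivAt (fun t => (hdouble t).sinh) fun t =>
    ((hdouble t).cosh.mul_const 2).congr_deriv ?_
  rw [linearisedPotential]
  linear_combination 12 * sinh_two_mul_mul_sech_sq t

theorem isParticularIntegral_id_mul_sech_sq : IsParticularIntegral linearisedPotential
    (fun t => 6 * t * sech t ^ 4 - 4 * Phi_a t) fun t => t * sech t ^ 2 :=
  (isParticularIntegral_sech_sq.id_mul hasDerivAt_sech_sq).congr (fun _ => by ring) fun _ => rfl

theorem isParticularIntegral_id_mul_Phi_a : IsParticularIntegral linearisedPotential
    (fun t => 6 * sech t ^ 4 - 4 * sech t ^ 2) fun t => t * Phi_a t :=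
  (isParticularIntegral_Phi_a.id_mul hasDerivAt_Phi_a).congr (fun _ => by ring) fun _ => rfl

theorem isParticularIntegral_sq_mul_Phi_a : IsParticularIntegral linearisedPotential
    (fun t => 2 * Phi_a t + 4 * t * (3 * sech t ^ 4 - 2 * sech t ^ 2))
    fun t => t ^ 2 * Phi_a t :=
  (isParticularIntegral_id_mul_Phi_a.id_mul fun t =>
    (hasDerivAt_id' t).fun_mul (hasDerivAt_Phi_a t)).congr (fun _ => by ring) fun _ => by ring

theorem Phi_p0_eq_cosh_two_mul_add (t : ℝ) :
    Phi_p0 t = 1 / 8 * (Real.cosh (2 * t) + 2 - 3 * sech t ^ 2 + 3 * (t * Phi_a t)) := by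
  have htanh : Real.tanh t ^ 2 = 1 - sech t ^ 2 := eq_sub_of_add_eq (tanh_sq_add_sech_sq t)
  have htanh4 : Real.tanh t ^ 4 = (1 - sech t ^ 2) ^ 2 := by rw [← htanh]; ring
  have hsinh_tanh :
      Real.sinh t ^ 2 * (15 * Real.tanh t ^ 4 - 25 * Real.tanh t ^ 2 + 8)
        = -2 * Real.cosh t ^ 2 - 3 + 20 * sech t ^ 2 - 15 * sech t ^ 4 := by
    rw [htanh4, htanh, Real.sinh_sq]
    linear_combination
      (15 * sech t ^ 2 - 5) * (Real.cosh t * sech t + 1) * cosh_mul_sech t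
  rw [Real.cosh_two_mul, Real.sinh_sq, Phi_p0, Phi_a]
  linear_combination (15 / 8 * sech t ^ 2 - 1 / 4) * htanh - 1 / 8 * hsinh_tanh

theorem isParticularIntegral_Phi_p0 :
    IsParticularIntegral linearisedPotential (fun _ => 2) Phi_p0 := by
  have hcosh := isParticularIntegral_cosh_two_mul.add (.const 2)
  have hsech := hcosh.sub (isParticularIntegral_sech_sq.const_mul 3)
  have hsum := hsech.add (isParticularIntegral_id_mul_Phi_a.const_mul 3)
  refine (hsum.const_mul (1 / 8)).congr (fun t => ?_) fun t => (Phi_p0_eq_cosh_two_mul_add t).symm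
  rw [linearisedPotential]
  ring

theorem isParticularIntegral_Phi_p1 :
    IsParticularIntegral linearisedPotential (fun t => 2 * (√2 * t)) Phi_p1 := by
  have hsinh := isParticularIntegral_sinh_two_mul.sub (IsParticularIntegral.id.const_mul 4)
  have htanh := hsinh.add (isParticularIntegral_tanh.const_mul 6)
  have hPhi_a := (isParticularIntegral_sq_mul_Phi_a.const_mul 6).add
    (isParticularIntegral_Phi_a.const_mul 15)
  have hsum := (htanh.sub hPhi_a).add (isParticularIntegral_id_mul_sech_sq.const_mul 12)
  refine (hsum.const_mul (√2 / 8)).congr (fun t => ?_) fun t => ?_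
  · rw [linearisedPotential]
    ring
  · rw [Phi_p1]
    ring

theorem IsParticularIntegral.deriv_deriv_comp_div_sqrt_two {F u : ℝ → ℝ}
    (h : IsParticularIntegral linearisedPotential F u) (y : ℝ) :
    deriv (deriv fun y => u (y / √2)) y + 2 * (3 * sech (y / √2) ^ 2 - 1) * u (y / √2)
      = F (y / √2) / 2 := by
  have hscaled := (h.comp_div √2).deriv_deriv_add y
  rw [Real.sq_sqrt zero_le_two, linearisedPotential] at hscaled
  linear_combination hscaled

/-- `v₀(y) = Φₚ⁽⁰⁾(y/√2)` and `v₁(y) = Φₚ⁽¹⁾(y/√2)` are particular integrals of the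
linearised equations with right-hand sides `1` and `y` respectively. -/
theorem statement11 :
    (∀ y : ℝ,
      deriv (deriv (fun y : ℝ => Phi_p0 (y / Real.sqrt 2))) y
        + 2 * (3 * (sech (y / Real.sqrt 2)) ^ 2 - 1) * Phi_p0 (y / Real.sqrt 2) = 1) ∧
    (∀ y : ℝ,
      deriv (deriv (fun y : ℝ => Phi_p1 (y / Real.sqrt 2))) y
        + 2 * (3 * (sech (y / Real.sqrt 2)) ^ 2 - 1) * Phi_p1 (y / Real.sqrt 2) = y) := by
  refine ⟨fun y => ?_, fun y => ?_⟩
  · rw [isParticularIntegral_Phi_p0.deriv_deriv_comp_div_sqrt_two, div_self two_ne_zero]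
  · rw [isParticularIntegral_Phi_p1.deriv_deriv_comp_div_sqrt_two,
      mul_div_cancel_left₀ _ two_ne_zero, mul_div_cancel₀ _ (Real.sqrt_ne_zero'.mpr two_pos)]
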